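/- Let σ_N² denote the variance of the number of vertices of outdegree two in a lemniscate tree sampled uniformly at random from LT_N. Then σ_N² = (4/π² + 2/π − 1)·N + O(1); that is, there exists a constant C > 0 such that |σ_N² − (4/π² + 2/π − 1)·N| ≤ C for all N ≥ 1. -/

import Mathlib

/-!
A lemniscate tree on `N` vertices is a rooted nonplane binary tree whose vertices are
bijectively labeled `1,…,N` (here: `Fin N`, with vertex `0` playing the role of label 1)
such that labels strictly increase along every path directed away from the root.
Since children are unordered, such a tree is faithfully encoded by its parent function:
vertex `0` is the root (it has no parent), every other vertex has a parent with strictly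
smaller label, and every vertex has at most two children.
-/
def LemniscateTree (N : ℕ) : Type :=
  {f : Fin N → Option (Fin N) //
    (∀ i : Fin N, f i = none ↔ (i : ℕ) = 0) ∧
    (∀ i j : Fin N, f i = some j → (j : ℕ) < (i : ℕ)) ∧
    (∀ j : Fin N, (Finset.univ.filter fun i => f i = some j).card ≤ 2)}

instance (N : ℕ) : Fintype (LemniscateTree N) := by
  unfold LemniscateTree; infer_instance

/-- The number of vertices of outdegree two (i.e. with exactly two children). -/
def outdegTwoCount {N : ℕ} (T : LemniscateTree N) : ℕ :=
  (Finset.univ.filter fun j : Fin N =>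
    (Finset.univ.filter fun i => T.1 i = some j).card = 2).card

/-- `μ_N`: the mean number of outdegree-two vertices of a uniformly random
lemniscate tree on `N` vertices. -/
noncomputable def lemMean (N : ℕ) : ℝ :=
  (∑ T : LemniscateTree N, (outdegTwoCount T : ℝ)) / (Fintype.card (LemniscateTree N))

/-- `σ_N²`: the variance of the number of outdegree-two vertices of a uniformly
random lemniscate tree on `N` vertices. -/
noncomputable def lemVar (N : ℕ) : ℝ :=
  (∑ T : LemniscateTree N, ((outdegTwoCount T : ℝ) - lemMean N) ^ 2) /
    (Fintype.card (LemniscateTree N))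

/-!
Removing the vertex with the largest label shows that a tree of `LT_{N+1}` is a tree `T` of `LT_N`
together with a vertex of `T` of outdegree at most one. If `T` has `X` vertices of outdegree two,
then it has `X + 1` leaves and `N - 1 - 2 X` unary vertices; attaching the new vertex to a leaf
keeps `X`, attaching it to a unary vertex increases `X` by one. Hence
`|LT_{N+1}| / |LT_N| = N - μ_N`, and one more step gives the second moment, so `σ_N²` is
a polynomial in `N` and two consecutive ratios of the numbers `|LT_N|`.

The same growth rule governs the iterated derivatives of a solution of `y'' = y y'`, and with
`y(0) = y'(0) = 1` it identifies the exponential generating function as `tan (z / 2 + π / 4)`. In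
the disc `|z| < 4` its only singularity is a simple pole at `π / 2` with residue `-2`, so Cauchy's
estimates give `|LT_N| = 2 N! (2 / π) ^ (N + 1) + O(N! / 3 ^ N)`. The relative error is
exponentially small, so the ratios are `(2 / π) (N + 1)` up to an error smaller than any power of
`N`, and substituting them gives `σ_N² = (4 / π² + 2 / π - 1) (N + 1) + o(1)`.
-/

namespace LemniscateTree

open Finset

variable {N : ℕ}

/-- The outdegree of the vertex `j`: its number of children. -/
def outdeg (T : LemniscateTree N) (j : Fin N) : ℕ := #{i | T.1 i = some j}

lemma outdeg_le_two (T : LemniscateTree N) (j : Fin N) : T.outdeg j ≤ 2 := T.2.2.2 j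

lemma outdegTwoCount_eq_card_filter (T : LemniscateTree N) :
    outdegTwoCount T = #{j | T.outdeg j = 2} := rfl

lemma sum_outdeg (hN : 0 < N) (T : LemniscateTree N) : ∑ j, T.outdeg j = N - 1 := by
  have root_iff (i : Fin N) : T.1 i = none ↔ i = ⟨0, hN⟩ := by simp [T.2.1, Fin.ext_iff]
  calc ∑ j, T.outdeg j = ∑ i, #{j | T.1 i = some j} := by
        simp only [outdeg, card_filter]
        exact sum_comm
    _ = ∑ i, if T.1 i = none then 0 else 1 := by
        refine sum_congr rfl fun i _ => ?_
        cases T.1 i <;> simp [filter_eq]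
    _ = N - 1 := by simp [root_iff, sum_ite, filter_ne']

lemma card_unary (hN : 0 < N) (T : LemniscateTree N) :
    #{j | T.outdeg j = 1} + (2 * outdegTwoCount T + 1) = N := by
  have h : #{j | T.outdeg j = 1} + 2 * outdegTwoCount T = ∑ j, T.outdeg j := by
    simp only [outdegTwoCount_eq_card_filter, card_filter, mul_sum, ← sum_add_distrib]
    refine sum_congr rfl fun j _ => ?_
    have := T.outdeg_le_two j
    split_ifs <;> omega
  rw [sum_outdeg hN] at h
  omega

lemma two_mul_outdegTwoCount_lt (hN : 0 < N) (T : LemniscateTree N) :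
    2 * outdegTwoCount T < N := by
  have := T.card_unary hN
  omega

lemma card_leaves (hN : 0 < N) (T : LemniscateTree N) :
    #{j | T.outdeg j = 0} = outdegTwoCount T + 1 := by
  have h : #{j | T.outdeg j = 0} + #{j | T.outdeg j = 1} + outdegTwoCount T = N := by
    simp only [outdegTwoCount_eq_card_filter, card_filter, ← sum_add_distrib]
    conv_rhs => rw [← Fintype.card_fin N, ← card_univ, card_eq_sum_ones]
    refine sum_congr rfl fun j _ => ?_
    have := T.outdeg_le_two j
    split_ifs <;> omega
  have := T.card_unary hN
  omega

/-- The parent function `p` extended by a new last vertex with parent `j`. -/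
def attachParent (p : Fin N → Option (Fin N)) (j : Fin N) : Fin (N + 1) → Option (Fin (N + 1)) :=
  Fin.snoc (α := fun _ => Option (Fin (N + 1))) (fun i => (p i).map Fin.castSucc) (some j.castSucc)

section attachParent

variable (p : Fin N → Option (Fin N)) (j : Fin N)

@[simp]
lemma attachParent_castSucc (i : Fin N) :
    attachParent p j i.castSucc = (p i).map Fin.castSucc := by
  simp [attachParent]

@[simp]
lemma attachParent_last : attachParent p j (Fin.last N) = some j.castSucc := by
  simp [attachParent]

lemma card_attachParent_eq_castSucc (k : Fin N) :
    #{i | attachParent p j i = some k.castSucc} =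
      #{i | p i = some k} + if j = k then 1 else 0 := by
  simp only [card_filter, Fin.sum_univ_castSucc]
  simp [-sum_boole]

lemma card_attachParent_eq_last : #{i | attachParent p j i = some (Fin.last N)} = 0 := by
  simp only [card_filter, Fin.sum_univ_castSucc]
  simp [-sum_boole]

lemma attachParent_injective2 :
    Function.Injective2 (attachParent : (Fin N → Option (Fin N)) → Fin N → _) := by
  intro p q j k h
  refine ⟨funext fun i => Option.map_injective (Fin.castSucc_injective N) ?_, ?_⟩
  · simpa using congrFun h i.castSucc
  · simpa using congrFun h (Fin.last N)

end attachParent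

/-- The tree obtained from `T` by attaching a new vertex, carrying the largest label, as a child of
the vertex `j`. -/
def graft (T : LemniscateTree N) (j : Fin N) (hj : T.outdeg j ≤ 1) : LemniscateTree (N + 1) :=
  ⟨attachParent T.1 j, by
    refine ⟨fun i => ?_, fun i k => ?_, fun k => ?_⟩
    · cases i using Fin.lastCases with
      | last => simp [j.pos.ne']
      | cast i => simp [T.2.1]
    · cases i using Fin.lastCases with
      | last => simp +contextual [eq_comm]
      | cast i =>
        simp only [attachParent_castSucc, Option.map_eq_some_iff]
        rintro ⟨a, ha, rfl⟩
        exact T.2.2.1 i a ha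
    · cases k using Fin.lastCases with
      | last => simp [card_attachParent_eq_last]
      | cast k =>
        rw [card_attachParent_eq_castSucc]
        have hk := T.outdeg_le_two k
        unfold outdeg at hj hk
        split_ifs with h
        · subst h; omega
        · omega⟩

lemma outdeg_graft_castSucc (T : LemniscateTree N) (j : Fin N) (hj : T.outdeg j ≤ 1) (k : Fin N) :
    (T.graft j hj).outdeg k.castSucc = T.outdeg k + if j = k then 1 else 0 :=
  card_attachParent_eq_castSucc T.1 j k

lemma outdeg_graft_last (T : LemniscateTree N) (j : Fin N) (hj : T.outdeg j ≤ 1) :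
    (T.graft j hj).outdeg (Fin.last N) = 0 :=
  card_attachParent_eq_last T.1 j

lemma outdegTwoCount_graft (T : LemniscateTree N) (j : Fin N) (hj : T.outdeg j ≤ 1) :
    outdegTwoCount (T.graft j hj) = outdegTwoCount T + if T.outdeg j = 1 then 1 else 0 := by
  have becomes_two (k : Fin N) : (if T.outdeg k + (if j = k then 1 else 0) = 2 then 1 else 0 : ℕ) =
      (if T.outdeg k = 2 then 1 else 0) +
        if j = k then (if T.outdeg j = 1 then 1 else 0) else 0 := by
    by_cases h : j = k
    · subst h
      simp only [if_true]
      split_ifs <;> omega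
    · simp [h]
  simp only [outdegTwoCount_eq_card_filter, card_filter, Fin.sum_univ_castSucc,
    outdeg_graft_castSucc, outdeg_graft_last, becomes_two, sum_add_distrib]
  simp

lemma exists_graft_eq (hN : 0 < N) (T : LemniscateTree (N + 1)) :
    ∃ (S : LemniscateTree N) (j : Fin N) (hj : S.outdeg j ≤ 1), S.graft j hj = T := by
  obtain ⟨p, hroot, hlt, hle⟩ := T
  obtain ⟨q, j, rfl⟩ : ∃ q j, p = attachParent q j := by
    have parent_old (i : Fin N) : ∃ o : Option (Fin N), p i.castSucc = o.map Fin.castSucc := by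
      rcases h : p i.castSucc with _ | a
      · exact ⟨none, rfl⟩
      · have ha : (a : ℕ) < i := hlt _ _ h
        exact ⟨some ⟨a, ha.trans i.isLt⟩, rfl⟩
    obtain ⟨j, hj⟩ : ∃ j : Fin N, p (Fin.last N) = some j.castSucc := by
      rcases h : p (Fin.last N) with _ | a
      · exact absurd ((hroot _).1 h) hN.ne'
      · exact ⟨⟨a, hlt _ _ h⟩, rfl⟩
    choose q hq using parent_old
    exact ⟨q, j, funext <| Fin.lastCases (by simp [hj]) (by simp [hq])⟩
  simp only [Fin.forall_fin_succ', card_attachParent_eq_castSucc, attachParent_castSucc]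
    at hroot hle
  refine ⟨⟨q, by simpa using hroot.1, fun i k hik => ?_, fun k => ?_⟩, j, ?_, rfl⟩
  · exact hlt i.castSucc k.castSucc (by simp [hik])
  · exact (Nat.le_add_right _ _).trans (hle.1 k)
  · have := hle.1 j
    rw [if_pos rfl] at this
    exact Nat.le_of_succ_le_succ this

/-- Removing the vertex with the largest label inverts `graft`. -/
noncomputable def graftEquiv (hN : 0 < N) :
    (Σ T : LemniscateTree N, {j : Fin N // T.outdeg j ≤ 1}) ≃ LemniscateTree (N + 1) :=
  Equiv.ofBijective (fun p => p.1.graft p.2.1 p.2.2) <| by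
    refine ⟨?_, fun T => ?_⟩
    · rintro ⟨T, j, hj⟩ ⟨S, k, hk⟩ h
      obtain ⟨hp, rfl⟩ := attachParent_injective2 (congrArg Subtype.val h)
      obtain rfl : T = S := Subtype.ext hp
      rfl
    · obtain ⟨S, j, hj, hS⟩ := exists_graft_eq hN T
      exact ⟨⟨S, j, hj⟩, hS⟩

lemma sum_outdegTwoCount_succ {M : Type*} [AddCommMonoid M] (hN : 0 < N) (φ : ℕ → M) :
    ∑ T : LemniscateTree (N + 1), φ (outdegTwoCount T) =
      ∑ T : LemniscateTree N, ((outdegTwoCount T + 1) • φ (outdegTwoCount T) +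
        (N - (2 * outdegTwoCount T + 1)) • φ (outdegTwoCount T + 1)) := by
  rw [← (graftEquiv hN).sum_comp, Fintype.sum_sigma]
  refine sum_congr rfl fun T _ => ?_
  have sum_graft : ∑ j : {j // T.outdeg j ≤ 1}, φ (outdegTwoCount (graftEquiv hN ⟨T, j⟩)) =
      ∑ j with T.outdeg j ≤ 1, φ (outdegTwoCount T + if T.outdeg j = 1 then 1 else 0) := by
    rw [sum_subtype (p := fun j => T.outdeg j ≤ 1) _ (by simp)]
    exact sum_congr rfl fun j _ => congrArg φ (T.outdegTwoCount_graft j j.2)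
  have leaves : (outdegTwoCount T + 1) • φ (outdegTwoCount T) =
      ∑ j with T.outdeg j = 0, φ (outdegTwoCount T) := by
    rw [sum_const, T.card_leaves hN]
  have unary : (N - (2 * outdegTwoCount T + 1)) • φ (outdegTwoCount T + 1) =
      ∑ j with T.outdeg j = 1, φ (outdegTwoCount T + 1) := by
    rw [sum_const, Nat.eq_sub_of_add_eq (T.card_unary hN)]
  rw [sum_graft, leaves, unary, sum_filter, sum_filter, sum_filter, ← sum_add_distrib]
  refine sum_congr rfl fun j _ => ?_
  rcases T.outdeg j with _ | _ | d <;> simp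

lemma card_eq_one_of_le_one (hN : N ≤ 1) : Fintype.card (LemniscateTree N) = 1 := by
  have val_zero (i : Fin N) : (i : ℕ) = 0 := by omega
  refine Fintype.card_eq_one_iff.2 ⟨⟨fun _ => none, ?_, by simp, by simp⟩, fun T => ?_⟩
  · simpa using val_zero
  · exact Subtype.ext (funext fun i => (T.2.1 i).2 (val_zero i))

instance : Nonempty (LemniscateTree N) := by
  rcases N.eq_zero_or_pos with rfl | hN
  · exact Fintype.card_pos_iff.1 (by simp [card_eq_one_of_le_one])
  · induction N, hN using Nat.le_induction with
    | base => exact Fintype.card_pos_iff.1 (by simp [card_eq_one_of_le_one])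
    | succ N hN ih =>
      obtain ⟨T⟩ := ih
      obtain ⟨j, hj⟩ : (univ.filter fun j => T.outdeg j = 0).Nonempty := by
        simp [← card_pos, T.card_leaves hN]
      exact ⟨T.graft j ((mem_filter.1 hj).2.le.trans zero_le_one)⟩

lemma card_succ (hN : 0 < N) :
    (Fintype.card (LemniscateTree (N + 1)) : ℝ) =
      ∑ T : LemniscateTree N, ((N : ℝ) - outdegTwoCount T) := by
  have h := sum_outdegTwoCount_succ hN fun _ => (1 : ℝ)
  rw [Fintype.card_eq_sum_ones, Nat.cast_sum, Nat.cast_one, h]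
  refine sum_congr rfl fun T _ => ?_
  rw [nsmul_eq_mul, nsmul_eq_mul, Nat.cast_sub (T.two_mul_outdegTwoCount_lt hN)]
  push_cast
  ring

lemma card_add_two (hN : 0 < N) :
    (Fintype.card (LemniscateTree (N + 2)) : ℝ) =
      ∑ T : LemniscateTree N, (((N : ℝ) - outdegTwoCount T) ^ 2 + outdegTwoCount T + 1) := by
  rw [card_succ N.succ_pos,
    sum_outdegTwoCount_succ hN fun x => ((N + 1 : ℕ) : ℝ) - (x : ℝ)]
  refine sum_congr rfl fun T _ => ?_
  rw [nsmul_eq_mul, nsmul_eq_mul, Nat.cast_sub (T.two_mul_outdegTwoCount_lt hN)]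
  push_cast
  ring

/-- The ratio `|LT_{N+1}| / |LT_N|` of consecutive numbers of lemniscate trees. -/
noncomputable def cardRatio (N : ℕ) : ℝ :=
  Fintype.card (LemniscateTree (N + 1)) / Fintype.card (LemniscateTree N)

lemma card_pos : (0 : ℝ) < Fintype.card (LemniscateTree N) :=
  Nat.cast_pos.2 Fintype.card_pos

lemma lemMean_eq (hN : 0 < N) : lemMean N = N - cardRatio N := by
  have hE := (card_pos (N := N)).ne'
  rw [lemMean, cardRatio, card_succ hN, sum_sub_distrib, sum_const, card_univ, nsmul_eq_mul]
  field_simp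
  ring

lemma lemVar_eq (hN : 0 < N) :
    lemVar N = cardRatio N * (cardRatio (N + 1) + 1 - cardRatio N) - (N + 1) := by
  have hE := (card_pos (N := N)).ne'
  have two_steps : cardRatio N * cardRatio (N + 1) * Fintype.card (LemniscateTree N) =
      ∑ T : LemniscateTree N, (((N : ℝ) - outdegTwoCount T) ^ 2 + outdegTwoCount T + 1) := by
    have hE' := (card_pos (N := N + 1)).ne'
    rw [← card_add_two hN, cardRatio, cardRatio]
    field_simp
  have one_step : cardRatio N * Fintype.card (LemniscateTree N) =
      ∑ T : LemniscateTree N, ((N : ℝ) - outdegTwoCount T) := by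
    rw [← card_succ hN, cardRatio, div_mul_cancel₀ _ hE]
  have sum_const_eq (c : ℝ) : ∑ _T : LemniscateTree N, c = c * Fintype.card (LemniscateTree N) := by
    rw [sum_const, card_univ, nsmul_eq_mul, mul_comm]
  rw [lemVar, div_eq_iff hE]
  calc ∑ T : LemniscateTree N, ((outdegTwoCount T : ℝ) - lemMean N) ^ 2
      = ∑ T : LemniscateTree N, ((((N : ℝ) - outdegTwoCount T) ^ 2 + outdegTwoCount T + 1) +
          (1 - 2 * cardRatio N) * ((N : ℝ) - outdegTwoCount T) +
          (cardRatio N ^ 2 - (N + 1))) := by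
        refine sum_congr rfl fun T _ => ?_
        rw [lemMean_eq hN]
        ring
    _ = _ := by
        rw [sum_add_distrib, sum_add_distrib, ← mul_sum, ← two_steps, ← one_step, sum_const_eq]
        ring

/-- The exponents are the numbers of leaves and of unary vertices of `T`: differentiating a factor
`y'` grafts at a leaf, differentiating a factor `y` grafts at a unary vertex. -/
lemma iteratedDeriv_succ_eq_sum {𝕜 𝔸 : Type*} [NontriviallyNormedField 𝕜] [NormedCommRing 𝔸]
    [NormedAlgebra 𝕜 𝔸] {U : Set 𝕜} (hU : IsOpen U) {y y' : 𝕜 → 𝔸}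
    (hy : ∀ z ∈ U, HasDerivAt y (y' z) z) (hy' : ∀ z ∈ U, HasDerivAt y' (y z * y' z) z)
    (N : ℕ) {z : 𝕜} (hz : z ∈ U) :
    iteratedDeriv (N + 1) y z = ∑ T : LemniscateTree (N + 1),
      y' z ^ (outdegTwoCount T + 1) * y z ^ (N - 2 * outdegTwoCount T) := by
  induction N generalizing z with
  | zero =>
    have count_eq_zero (T : LemniscateTree 1) : outdegTwoCount T = 0 := by
      have := T.two_mul_outdegTwoCount_lt one_pos
      omega
    simp [count_eq_zero, card_eq_one_of_le_one, (hy z hz).deriv]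
  | succ N ih =>
    have hderiv := HasDerivAt.fun_sum (u := univ) fun (T : LemniscateTree (N + 1)) _ =>
      ((hy' z hz).fun_pow (outdegTwoCount T + 1)).fun_mul
        ((hy z hz).fun_pow (N - 2 * outdegTwoCount T))
    have hloc := Filter.eventually_of_mem (hU.mem_nhds hz) fun w hw => ih hw
    rw [iteratedDeriv_succ, Filter.EventuallyEq.deriv_eq hloc, hderiv.deriv,
      sum_outdegTwoCount_succ N.succ_pos fun x => y' z ^ (x + 1) * y z ^ (N + 1 - 2 * x)]
    refine sum_congr rfl fun T _ => ?_
    obtain ⟨m, hm⟩ := Nat.exists_eq_add_of_le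
      (Nat.le_of_lt_succ (T.two_mul_outdegTwoCount_lt N.succ_pos))
    generalize outdegTwoCount T = x at hm ⊢
    subst hm
    rw [show 2 * x + m - 2 * x = m by omega, show 2 * x + m + 1 - 2 * x = m + 1 by omega,
      show 2 * x + m + 1 - (2 * x + 1) = m by omega,
      show 2 * x + m + 1 - 2 * (x + 1) = m - 1 by omega]
    simp only [nsmul_eq_mul, Nat.add_sub_cancel]
    push_cast
    ring

end LemniscateTree

section SimplePole

open Complex Metric Topology
open scoped Nat

lemma iteratedDeriv_div_sub {𝕜 : Type*} [NontriviallyNormedField 𝕜] (c a z : 𝕜) (n : ℕ) :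
    iteratedDeriv n (fun w => c / (w - a)) z = -(c * n ! / (a - z) ^ (n + 1)) := by
  have hinv : iteratedDeriv n (fun w => (1 * w - a)⁻¹) z = -(n ! / (a - z) ^ (n + 1)) := by
    rw [iteratedDeriv_eq_iterate, iter_deriv_inv_linear_sub]
    simp only [one_mul, one_pow, mul_one]
    rw [show (-1 - n : ℤ) = -((n + 1 : ℕ) : ℤ) by push_cast; ring, zpow_neg, zpow_natCast,
      ← neg_sub a z, neg_pow (a - z)]
    have hsign : (-1 : 𝕜) ^ n * ((-1) ^ (n + 1))⁻¹ = -1 := by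
      rw [pow_succ, mul_inv, mul_inv_cancel_left₀ (pow_ne_zero _ (by simp))]
      norm_num
    rw [mul_inv, div_eq_mul_inv]
    linear_combination (n ! * ((a - z) ^ (n + 1))⁻¹ : 𝕜) * hsign
  simp only [one_mul] at hinv
  simp only [div_eq_mul_inv c, iteratedDeriv_const_mul_field, hinv]
  ring

lemma exists_norm_iteratedDeriv_add_le {f g : ℂ → ℂ} {z₀ a c : ℂ} {r : ℝ} (hr : 0 < r)
    (ha : z₀ ≠ a) (hg : DiffContOnCl ℂ g (ball z₀ r))
    (hf : f =ᶠ[𝓝 z₀] fun z => c / (z - a) + g z) :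
    ∃ M : ℝ, ∀ n : ℕ,
      ‖iteratedDeriv n f z₀ + c * n ! / (a - z₀) ^ (n + 1)‖ ≤ n ! * M / r ^ n := by
  obtain ⟨M, hM⟩ := (isCompact_closedBall z₀ r).exists_bound_of_continuousOn
    hg.continuousOn_ball
  refine ⟨M, fun n => ?_⟩
  have hpole : ContDiffAt ℂ n (fun z => c / (z - a)) z₀ :=
    contDiffAt_const.div (by fun_prop) (sub_ne_zero.2 ha)
  have hreg : ContDiffAt ℂ n g z₀ :=
    (hg.differentiableOn.analyticAt (ball_mem_nhds z₀ hr)).contDiffAt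
  rw [hf.iteratedDeriv_eq, iteratedDeriv_fun_add hpole hreg, iteratedDeriv_div_sub,
    neg_add_eq_sub, sub_add_cancel]
  exact norm_iteratedDeriv_le_of_forall_mem_sphere_norm_le n hr hg
    fun z hz => hM z (sphere_subset_closedBall hz)

lemma exists_div_eq_div_sub_add {f g : ℂ → ℂ} {U : Set ℂ} {a : ℂ} (hU : U ∈ 𝓝 a)
    (hf : DifferentiableOn ℂ f U) (hg : DifferentiableOn ℂ g U) (hga : g a = 0)
    (hg' : deriv g a ≠ 0) (hne : ∀ z ∈ U, z ≠ a → g z ≠ 0) :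
    ∃ h : ℂ → ℂ, DifferentiableOn ℂ h U ∧
      ∀ z ≠ a, f z / g z = f a / deriv g a / (z - a) + h z := by
  have g_eq (z : ℂ) : (z - a) * dslope g a z = g z := sub_smul_dslope_of_zero hga z
  have dslope_ne (z : ℂ) (hz : z ∈ U) : dslope g a z ≠ 0 := by
    rcases eq_or_ne z a with rfl | hza
    · rwa [dslope_same]
    · exact fun h0 => hne z hz hza (by rw [← g_eq, h0, mul_zero])
  set p : ℂ → ℂ := fun z => f z / dslope g a z
  have hp : DifferentiableOn ℂ p U :=
    hf.fun_div ((differentiableOn_dslope hU).2 hg) dslope_ne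
  refine ⟨dslope p a, (differentiableOn_dslope hU).2 hp, fun z hza => ?_⟩
  have hz : z - a ≠ 0 := sub_ne_zero.2 hza
  calc f z / g z = p z / (z - a) := by rw [← g_eq, mul_comm, ← div_div]
    _ = p a / (z - a) + (p z - p a) / (z - a) := by ring
    _ = f a / deriv g a / (z - a) + dslope p a z := by
        rw [← sub_smul_dslope p a z, smul_eq_mul, mul_div_cancel_left₀ _ hz]
        simp only [p, dslope_same]

end SimplePole

section GeneratingFunction

open Complex Metric Topology
open scoped Nat Real

/-- The exponential generating function of lemniscate trees, `sec z + tan z` in half-angle form. -/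
noncomputable def lemniscateEGF (z : ℂ) : ℂ := tan (z / 2 + π / 4)

/-- The derivative of `lemniscateEGF` away from its poles. -/
noncomputable def lemniscateEGFDeriv (z : ℂ) : ℂ := 1 / (2 * cos (z / 2 + π / 4) ^ 2)

lemma hasDerivAt_half_add (z : ℂ) :
    HasDerivAt (fun w : ℂ => w / 2 + π / 4) (1 / 2) z :=
  ((hasDerivAt_id z).div_const 2).add_const _

lemma hasDerivAt_lemniscateEGF {z : ℂ} (hz : cos (z / 2 + π / 4) ≠ 0) :
    HasDerivAt lemniscateEGF (lemniscateEGFDeriv z) z := by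
  refine ((hasDerivAt_tan hz).comp z (hasDerivAt_half_add z)).congr_deriv ?_
  rw [lemniscateEGFDeriv]
  ring

lemma hasDerivAt_cos_half_add (z : ℂ) :
    HasDerivAt (fun w : ℂ => cos (w / 2 + π / 4)) (-sin (z / 2 + π / 4) * (1 / 2)) z :=
  (hasDerivAt_half_add z).ccos

lemma hasDerivAt_lemniscateEGFDeriv {z : ℂ} (hz : cos (z / 2 + π / 4) ≠ 0) :
    HasDerivAt lemniscateEGFDeriv (lemniscateEGF z * lemniscateEGFDeriv z) z := by
  have hden := ((hasDerivAt_cos_half_add z).fun_pow 2).const_mul 2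
  refine ((hasDerivAt_const z (1 : ℂ)).fun_div hden (by simpa using hz)).congr_deriv ?_
  rw [lemniscateEGF, lemniscateEGFDeriv, tan_eq_sin_div_cos]
  clear hden
  generalize z / 2 + (π : ℂ) / 4 = w at hz ⊢
  push_cast
  field_simp
  ring

lemma cos_pi_div_four_sq : cos (π / 4 : ℂ) ^ 2 = 1 / 2 := by
  have hreal : Real.cos (π / 4) ^ 2 = 1 / 2 := by
    rw [Real.cos_pi_div_four, div_pow, Real.sq_sqrt zero_le_two]
    norm_num
  have hcast := congrArg ofReal hreal
  push_cast at hcast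
  exact hcast

lemma iteratedDeriv_lemniscateEGF_zero (N : ℕ) :
    iteratedDeriv N lemniscateEGF 0 = Fintype.card (LemniscateTree N) := by
  have hval : lemniscateEGF 0 = 1 := by
    have hreal := congrArg ofReal Real.tan_pi_div_four
    push_cast at hreal
    rwa [lemniscateEGF, zero_div, zero_add]
  have hderiv : lemniscateEGFDeriv 0 = 1 := by
    rw [lemniscateEGFDeriv, zero_div, zero_add, cos_pi_div_four_sq]
    norm_num
  rcases N with _ | N
  · simp [hval, LemniscateTree.card_eq_one_of_le_one]
  · have hopen : IsOpen {z : ℂ | cos (z / 2 + π / 4) ≠ 0} :=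
      isOpen_ne_fun (by fun_prop) continuous_const
    have hzero : cos ((0 : ℂ) / 2 + π / 4) ≠ 0 := by
      rw [zero_div, zero_add, ← sq_eq_zero_iff.ne, cos_pi_div_four_sq]
      norm_num
    rw [LemniscateTree.iteratedDeriv_succ_eq_sum hopen (fun _ => hasDerivAt_lemniscateEGF)
      (fun _ => hasDerivAt_lemniscateEGFDeriv) N hzero, hval, hderiv]
    simp

lemma eq_pi_div_two_of_cos_half_add_eq_zero {z : ℂ} (hz : ‖z‖ < 4)
    (h : cos (z / 2 + π / 4) = 0) : z = π / 2 := by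
  obtain ⟨k, hk⟩ := cos_eq_zero_iff.1 h
  have z_eq : z = (((4 * k + 1 : ℤ) * (π / 2) : ℝ) : ℂ) := by
    push_cast
    linear_combination 2 * hk
  have hk0 : k = 0 := by
    by_contra hk0
    have three_le : (3 : ℝ) ≤ |((4 * k + 1 : ℤ) : ℝ)| := by
      exact_mod_cast le_abs.2 (by omega : (3 : ℤ) ≤ 4 * k + 1 ∨ 3 ≤ -(4 * k + 1))
    rw [z_eq, norm_real, Real.norm_eq_abs, abs_mul, abs_of_pos Real.pi_div_two_pos] at hz
    nlinarith [Real.pi_gt_three]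
  rw [z_eq, hk0]
  push_cast
  ring

lemma exists_lemniscateEGF_eq_add : ∃ g : ℂ → ℂ, DifferentiableOn ℂ g (ball 0 4) ∧
    ∀ z ≠ (π / 2 : ℂ), lemniscateEGF z = -2 / (z - π / 2) + g z := by
  have pole_mem : (π / 2 : ℂ) ∈ ball (0 : ℂ) 4 := by
    have hnorm : ‖(π / 2 : ℂ)‖ = π / 2 := by
      rw [norm_div, norm_real, Real.norm_of_nonneg Real.pi_nonneg, norm_ofNat]
    rw [mem_ball_zero_iff, hnorm]
    linarith [Real.pi_lt_four]
  have pole_arg : (π / 2 : ℂ) / 2 + π / 4 = π / 2 := by ring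
  have deriv_cos : deriv (fun w : ℂ => cos (w / 2 + π / 4)) (π / 2) = -1 / 2 := by
    rw [(hasDerivAt_cos_half_add _).deriv, pole_arg, sin_pi_div_two]
    norm_num
  obtain ⟨g, hg, hfg⟩ := exists_div_eq_div_sub_add (isOpen_ball.mem_nhds pole_mem)
    (f := fun w => sin (w / 2 + π / 4)) (g := fun w => cos (w / 2 + π / 4))
    (by fun_prop) (by fun_prop) (by rw [pole_arg, cos_pi_div_two])
    (by rw [deriv_cos]; norm_num)
    (fun z hz hne h0 => hne (eq_pi_div_two_of_cos_half_add_eq_zero (mem_ball_zero_iff.1 hz) h0))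
  refine ⟨g, hg, fun z hz => ?_⟩
  rw [lemniscateEGF, tan_eq_sin_div_cos, hfg z hz, deriv_cos, pole_arg, sin_pi_div_two]
  norm_num

lemma exists_abs_card_sub_le : ∃ M : ℝ, ∀ N : ℕ,
    |(Fintype.card (LemniscateTree N) : ℝ) - 2 * N ! / (π / 2) ^ (N + 1)| ≤
      N ! * M / 3 ^ N := by
  obtain ⟨g, hg, hgf⟩ := exists_lemniscateEGF_eq_add
  have pole_ne : (0 : ℂ) ≠ π / 2 := by exact_mod_cast Real.pi_div_two_pos.ne
  have near_zero : lemniscateEGF =ᶠ[𝓝 0] fun z => -2 / (z - π / 2) + g z :=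
    Filter.eventually_of_mem (isOpen_ne.mem_nhds pole_ne) hgf
  obtain ⟨M, hM⟩ := exists_norm_iteratedDeriv_add_le three_pos pole_ne
    (hg.diffContOnCl_ball (closedBall_subset_ball (by norm_num))) near_zero
  refine ⟨M, fun N => le_of_eq_of_le ?_ (hM N)⟩
  rw [iteratedDeriv_lemniscateEGF_zero, ← Real.norm_eq_abs, ← norm_real]
  push_cast
  ring_nf

end GeneratingFunction

section SuperpolynomialDecay

open Asymptotics Filter Topology

lemma superpolynomialDecay_pow {r : ℝ} (hr : |r| < 1) :
    SuperpolynomialDecay atTop (fun n : ℕ => (n : ℝ)) fun n => r ^ n :=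
  fun k => tendsto_pow_const_mul_const_pow_of_abs_lt_one k hr

lemma superpolynomialDecay_comp_add {f : ℕ → ℝ}
    (hf : SuperpolynomialDecay atTop (fun n : ℕ => (n : ℝ)) f) (m : ℕ) :
    SuperpolynomialDecay atTop (fun n : ℕ => (n : ℝ)) fun n => f (n + m) := by
  rw [superpolynomialDecay_iff_abs_tendsto_zero] at hf ⊢
  intro k
  refine squeeze_zero (fun _ => abs_nonneg _) (fun n => ?_)
    ((hf k).comp (tendsto_add_atTop_nat m))
  simp only [Function.comp, abs_mul, abs_pow, Nat.abs_cast]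
  gcongr
  exact Nat.le_add_right n m

lemma superpolynomialDecay_mul_tendsto {α β : Type*} [TopologicalSpace β] [CommSemiring β]
    [ContinuousMul β] {l : Filter α} {k f g : α → β} {b : β} (hf : SuperpolynomialDecay l k f)
    (hg : Tendsto g l (𝓝 b)) : SuperpolynomialDecay l k fun x => f x * g x :=
  fun n => by simpa only [mul_assoc, zero_mul] using (hf n).mul hg

end SuperpolynomialDecay

section Asymptotics

open Asymptotics Filter Topology LemniscateTree
open scoped Nat Real

/-- The number of lemniscate trees on `N` vertices, rescaled by the reciprocal of the growth
`N! * (2 / π) ^ (N + 1)` caused by the pole of `lemniscateEGF` at `π / 2`. -/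
noncomputable def normalizedCard (N : ℕ) : ℝ :=
  Fintype.card (LemniscateTree N) * (π / 2) ^ (N + 1) / N !

lemma superpolynomialDecay_normalizedCard_sub_two :
    SuperpolynomialDecay atTop (fun N : ℕ => (N : ℝ)) fun N => normalizedCard N - 2 := by
  obtain ⟨M, hM⟩ := exists_abs_card_sub_le
  have hpi : |π / 6| < 1 := by
    rw [abs_of_pos (by positivity)]
    linarith [Real.pi_lt_four]
  refine ((superpolynomialDecay_pow hpi).const_mul (M * (π / 2))).trans_abs_le fun N => ?_
  have hscale : 0 < (π / 2) ^ (N + 1) / N ! := by positivity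
  calc |normalizedCard N - 2|
      = |(Fintype.card (LemniscateTree N) : ℝ) - 2 * N ! / (π / 2) ^ (N + 1)| *
          ((π / 2) ^ (N + 1) / N !) := by
        conv_rhs => rw [← abs_of_pos hscale, ← abs_mul]
        rw [normalizedCard]
        congr 1
        field_simp
    _ ≤ N ! * M / 3 ^ N * ((π / 2) ^ (N + 1) / N !) := by gcongr; exact hM N
    _ = M * (π / 2) * (π / 6) ^ N := by
        rw [show π / 6 = π / 2 / 3 by ring, div_pow (π / 2) 3, pow_succ]
        field_simp
    _ ≤ _ := le_abs_self _

lemma normalizedCard_pos (N : ℕ) : 0 < normalizedCard N := by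
  have := card_pos (N := N)
  unfold normalizedCard
  positivity

lemma tendsto_normalizedCard : Tendsto normalizedCard atTop (𝓝 2) := by
  rw [← tendsto_sub_nhds_zero_iff]
  simpa using superpolynomialDecay_normalizedCard_sub_two 0

lemma cardRatio_eq (N : ℕ) :
    cardRatio N = 2 / π * (N + 1) * (normalizedCard (N + 1) / normalizedCard N) := by
  have hE := (card_pos (N := N)).ne'
  rw [cardRatio, normalizedCard, normalizedCard, Nat.factorial_succ, pow_succ _ (N + 1)]
  push_cast
  field_simp

lemma superpolynomialDecay_cardRatio_sub :
    SuperpolynomialDecay atTop (fun N : ℕ => (N : ℝ)) fun N =>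
      cardRatio N - 2 / π * (N + 1) := by
  have hdiff : SuperpolynomialDecay atTop (fun N : ℕ => (N : ℝ)) fun N =>
      normalizedCard (N + 1) - normalizedCard N := by
    have h := superpolynomialDecay_normalizedCard_sub_two
    refine ((superpolynomialDecay_comp_add h 1).add (h.const_mul (-1))).congr fun N => ?_
    simp only [Pi.add_apply]
    ring
  have hquot := superpolynomialDecay_mul_tendsto hdiff (tendsto_normalizedCard.inv₀ two_ne_zero)
  refine (hquot.polynomial_mul (.C (2 / π) * (.X + 1))).congr fun N => ?_
  have hne := (normalizedCard_pos N).ne'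
  rw [cardRatio_eq]
  simp only [Polynomial.eval_mul, Polynomial.eval_C, Polynomial.eval_add, Polynomial.eval_X,
    Polynomial.eval_one]
  field_simp

lemma superpolynomialDecay_lemVar_sub :
    SuperpolynomialDecay atTop (fun N : ℕ => (N : ℝ)) fun N =>
      lemVar N - (4 / π ^ 2 + 2 / π - 1) * (N + 1) := by
  set ε : ℕ → ℝ := fun N => cardRatio N - 2 / π * (N + 1)
  have hε : SuperpolynomialDecay atTop (fun N : ℕ => (N : ℝ)) ε :=
    superpolynomialDecay_cardRatio_sub
  have hδ : SuperpolynomialDecay atTop (fun N : ℕ => (N : ℝ)) fun N => ε (N + 1) - ε N :=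
    ((superpolynomialDecay_comp_add hε 1).add (hε.const_mul (-1))).congr fun N => by
      simp only [Pi.add_apply]
      ring
  have hlinear := hδ.polynomial_mul (.C (2 / π) * (.X + 1))
  refine ((hlinear.add (hε.const_mul (2 / π + 1))).add (hε.mul hδ)).congr' ?_
  filter_upwards [eventually_gt_atTop 0] with N hN
  rw [lemVar_eq hN]
  simp only [Pi.add_apply, Pi.mul_apply, Polynomial.eval_mul, Polynomial.eval_C,
    Polynomial.eval_add, Polynomial.eval_X, Polynomial.eval_one, ε]
  push_cast
  ring

end Asymptotics

/-- `σ_N² = (4/π² + 2/π − 1)·N + O(1)`. -/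
theorem var_outdegTwo_asymptotic :
    ∃ C : ℝ, 0 < C ∧ ∀ N : ℕ, 1 ≤ N →
      |lemVar N - (4 / Real.pi ^ 2 + 2 / Real.pi - 1) * N| ≤ C := by
  have hlim := superpolynomialDecay_lemVar_sub 0
  obtain ⟨C, hC⟩ := (Metric.isBounded_range_of_tendsto _ hlim).exists_norm_le
  refine ⟨max C 1 + |4 / Real.pi ^ 2 + 2 / Real.pi - 1|, by positivity, fun N _ => ?_⟩
  have hN : |lemVar N - (4 / Real.pi ^ 2 + 2 / Real.pi - 1) * (N + 1)| ≤ C := by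
    simpa using hC _ ⟨N, rfl⟩
  calc |lemVar N - (4 / Real.pi ^ 2 + 2 / Real.pi - 1) * N|
      = |(lemVar N - (4 / Real.pi ^ 2 + 2 / Real.pi - 1) * (N + 1)) +
          (4 / Real.pi ^ 2 + 2 / Real.pi - 1)| := by
        congr 1
        ring
    _ ≤ _ := (abs_add_le _ _).trans (by gcongr; exact hN.trans (le_max_left _ _))
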